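/- arXiv:2303.13964 — 2 statements merged into one kernel-verified Lean document; each statement's English description precedes it below -/
import Mathlib

section
/- Assume G is connected, let Y_obs ∈ ℝ^n, y_∞ = ‖Y_obs‖_∞, let μ_min ≤ μ_max be the smallest and largest eigenvalues of B(A), ν = 1 − μ_min/μ_max, B̃ = B(A)/μ_max, and T_r(A) = (I − B̃)^r μ_max^{-1} S̃_in Y_obs. Let i, j, u be nodes such that dist_G(i,u) ≥ k, dist_G(j,u) ≥ k, and dist_G(i,v) ≥ q, dist_G(j,v) ≥ q for all v ∈ V_tr. Then the derivative of (T_r(A))_u along the symmetric perturbation of the entry pair (A_{ij}, A_{ji}) (with μ_max and m held fixed) satisfies: |∂(T_r)_u/∂A_{ij}| = 0 if q + k > r, and |∂(T_r)_u/∂A_{ij}| ≤ (4 λ y_∞ / (m μ_max² √|V_tr|)) (r − q − k) ν^{r−1} otherwise. -/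
/-!
Write `M = I - B/μmax`. For the symmetric perturbation of the pair `(A i j, A j i)` the Laplacian
is affine, `L(A_θ) = L(A) + (θ - A i j) d dᵀ` with `d = e_i - e_j` (`lapMat_pert`), so the product
rule writes the derivative of `(T_r)_u` as
`-(λ / (m μmax)) ∑_{a + b = r - 1} (M ^ a d)_u · (dᵀ M ^ b w)` with `w = μmax⁻¹ S̃_in Y_obs`.

* Locality (`pow_apply_eq_zero`): `M` is supported on the diagonal and on the edges of `G`, so
  `M ^ a` vanishes between nodes at distance greater than `a`. A summand is therefore zero unless
  `k ≤ a` and `q ≤ b`, which leaves exactly `r - q - k` summands (none when `r ≤ q + k`).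
* Size (`norm_le_of_eigenvalues`): `M` is symmetric with spectrum in `[0, ν]`, so its `ℓ²` operator
  norm is at most `ν`. Together with `‖d‖₂ ≤ √2` and `‖S̃_in Y_obs‖₂ ≤ y_∞ / √|V_tr|`, each summand
  is at most `2 ν ^ (r - 1) μmax⁻¹ y_∞ / √|V_tr|`; this is half of what the claim allows.
-/


/-! STATEMENT 15: the derivative of `(T_r)_u` along the symmetric perturbation of
`(A i j, A j i)` vanishes when `q + k > r` and is otherwise bounded by
`(4 λ y_∞ / (m μmax² √|V_tr|)) (r - q - k) ν^(r-1)`. -/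

open scoped BigOperators Matrix

/-- The (weighted) graph Laplacian `L = D - A` with degree matrix `D = diag (A 1ₙ)`. -/
noncomputable def lapMat {n : ℕ} (A : Matrix (Fin n) (Fin n) ℝ) :
    Matrix (Fin n) (Fin n) ℝ :=
  Matrix.diagonal (fun u => ∑ v, A u v) - A

/-- The diagonal 0/1 selection matrix of a set `V` of nodes. -/
noncomputable def selMat {n : ℕ} (V : Finset (Fin n)) : Matrix (Fin n) (Fin n) ℝ :=
  Matrix.diagonal (fun u => if u ∈ V then 1 else 0)

/-- `S̃_in = S_in / |V_tr|`. -/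
noncomputable def Stin {n : ℕ} (Vtr : Finset (Fin n)) : Matrix (Fin n) (Fin n) ℝ :=
  (Vtr.card : ℝ)⁻¹ • selMat Vtr

/-- `B = S̃_in + λ L̃` where `L̃ = L/m`. -/
noncomputable def Bmat {n : ℕ} (Vtr : Finset (Fin n)) (lam : ℝ) (m : ℕ)
    (A : Matrix (Fin n) (Fin n) ℝ) : Matrix (Fin n) (Fin n) ℝ :=
  Stin Vtr + (lam / m) • lapMat A

/-- `T_r = (I - B̃)^r μmax⁻¹ S̃_in Y_obs`, the `r`-th term of the Neumann series of
`Y(A) = B⁻¹ S̃_in Y_obs`, where `B̃ = B/μmax`. -/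
noncomputable def Tvec {n : ℕ} (Vtr : Finset (Fin n)) (lam : ℝ) (m : ℕ)
    (A : Matrix (Fin n) (Fin n) ℝ) (μmax : ℝ) (Yobs : Fin n → ℝ) (r : ℕ) :
    Fin n → ℝ :=
  ((1 - μmax⁻¹ • Bmat Vtr lam m A) ^ r).mulVec (μmax⁻¹ • (Stin Vtr).mulVec Yobs)

/-- Symmetric perturbation of the entry pair `(A i j, A j i)` of `A` to the value `θ`. -/
noncomputable def pert {n : ℕ} (A : Matrix (Fin n) (Fin n) ℝ) (i j : Fin n) (θ : ℝ) :
    Matrix (Fin n) (Fin n) ℝ :=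
  Matrix.of fun s t => if (s = i ∧ t = j) ∨ (s = j ∧ t = i) then θ else A s t

section Aux

open scoped Matrix.Norms.L2Operator

open Matrix

/-- The vector `e_i - e_j`, whose rank-one matrix is the derivative of the Laplacian. -/
noncomputable def edgeVec {n : ℕ} (i j : Fin n) : Fin n → ℝ := Pi.single i 1 - Pi.single j 1

/-- When `i = j` both sides are independent of `θ`, since a diagonal entry of `A` cancels in
`D - A`. -/
lemma lapMat_pert {n : ℕ} (A : Matrix (Fin n) (Fin n) ℝ) (hsymm : A.IsSymm) (i j : Fin n) (θ : ℝ) :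
    lapMat (pert A i j θ) = lapMat A + (θ - A i j) • vecMulVec (edgeVec i j) (edgeVec i j) := by
  have hji : A j i = A i j := hsymm.apply i j
  have hp : ∀ s t, pert A i j θ s t = A s t +
      (θ - A i j) * (if (s = i ∧ t = j) ∨ (s = j ∧ t = i) then 1 else 0) := by
    intro s t
    simp only [pert, of_apply]
    split_ifs with h
    · rcases h with ⟨rfl, rfl⟩ | ⟨rfl, rfl⟩
      · ring
      · rw [hji]; ring
    · ring
  have hsum : ∀ s, ∑ t, pert A i j θ s t = ∑ t, A s t + (θ - A i j) *
      ∑ t, (if (s = i ∧ t = j) ∨ (s = j ∧ t = i) then (1 : ℝ) else 0) := by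
    intro s
    simp_rw [hp, Finset.sum_add_distrib, Finset.mul_sum]
  have hE : ∀ s t : Fin n,
      (if s = t then ∑ t, (if (s = i ∧ t = j) ∨ (s = j ∧ t = i) then (1 : ℝ) else 0) else 0)
        - (if (s = i ∧ t = j) ∨ (s = j ∧ t = i) then (1 : ℝ) else 0)
      = edgeVec i j s * edgeVec i j t := by
    intro s t
    have hs : ∑ t, (if (s = i ∧ t = j) ∨ (s = j ∧ t = i) then (1 : ℝ) else 0)
        = if s = i ∨ s = j then 1 else 0 := by
      by_cases h1 : s = i
      · by_cases h2 : s = j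
        · subst h1; subst h2; simp
        · simp [h1, show i ≠ j from h1 ▸ h2]
      · by_cases h2 : s = j
        · simp [h2, show j ≠ i from h2 ▸ h1]
        · simp [h1, h2]
    rw [hs]
    simp only [edgeVec, Pi.sub_apply, Pi.single_apply]
    grind
  ext s t
  simp only [lapMat, Matrix.sub_apply, Matrix.add_apply, Matrix.smul_apply, vecMulVec_apply,
    diagonal_apply, smul_eq_mul, ← hE]
  rw [hsum, hp]
  split_ifs <;> ring

lemma abs_dotProduct_mulVec_le {n : ℕ} (X : Matrix (Fin n) (Fin n) ℝ) (x y : Fin n → ℝ) :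
    |x ⬝ᵥ X *ᵥ y| ≤ ‖X‖ * (‖WithLp.toLp 2 x‖ * ‖WithLp.toLp 2 y‖) := by
  have h1 := abs_real_inner_le_norm (WithLp.toLp 2 (X *ᵥ y)) (WithLp.toLp 2 x)
  have h2 := l2_opNorm_mulVec X (WithLp.toLp 2 y)
  have h3 : inner ℝ (WithLp.toLp 2 (X *ᵥ y)) (WithLp.toLp 2 x) = x ⬝ᵥ X *ᵥ y := by
    simp [EuclideanSpace.inner_toLp_toLp]
  rw [h3] at h1
  refine h1.trans ?_
  have h2' : ‖WithLp.toLp 2 (X *ᵥ y)‖ ≤ ‖X‖ * ‖WithLp.toLp 2 y‖ := h2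
  calc _ ≤ (‖X‖ * ‖WithLp.toLp 2 y‖) * ‖WithLp.toLp 2 x‖ := by gcongr
    _ = _ := by ring

/-- The `ℓ²` operator norm of a symmetric matrix is controlled by its eigenvalues. -/
lemma norm_le_of_eigenvalues {n : ℕ} (M : Matrix (Fin n) (Fin n) ℝ) (hM : M.IsHermitian) (ν : ℝ)
    (hν : 0 ≤ ν) (h : ∀ (e : ℝ) (x : Fin n → ℝ), x ≠ 0 → M *ᵥ x = e • x → |e| ≤ ν) :
    ‖M‖ ≤ ν := by
  rw [hM.spectral_theorem, Unitary.conjStarAlgAut_apply, ← Unitary.coe_star,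
    CStarRing.norm_mul_coe_unitary, CStarRing.norm_coe_unitary_mul, l2_opNorm_diagonal,
    pi_norm_le_iff_of_nonneg hν]
  intro s
  refine h _ _ ?_ (hM.mulVec_eigenvectorBasis s)
  intro h0
  exact hM.eigenvectorBasis.toBasis.ne_zero s (by simpa using h0)

/-- A matrix supported on the diagonal and the edges of `G` moves mass along at most one edge, so
its `a`-th power does not reach beyond distance `a`. -/
lemma pow_apply_eq_zero {n : ℕ} (G : SimpleGraph (Fin n)) (M : Matrix (Fin n) (Fin n) ℝ)
    (hM : ∀ s t, s ≠ t → ¬ G.Adj s t → M s t = 0) (a : ℕ) :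
    ∀ s t, (a : ℕ∞) < G.edist s t → (M ^ a) s t = 0 := by
  induction a with
  | zero =>
    intro s t h
    have : s ≠ t := by rintro rfl; simp at h
    simp [this]
  | succ a ih =>
    intro s t h
    rw [pow_succ, mul_apply]
    refine Finset.sum_eq_zero fun v _ => ?_
    by_cases hv : G.edist v t ≤ 1
    · rw [ih s v, zero_mul]
      by_contra! hlt
      have h3 := (G.edist_triangle (u := s) (v := v) (w := t)).trans (add_le_add hlt hv)
      push_cast at h
      exact absurd h3 (not_le.mpr h)
    · rw [SimpleGraph.edist_le_one_iff_adj_or_eq, not_or] at hv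
      rw [hM v t hv.2 hv.1, mul_zero]

lemma Bmat_isHermitian {n : ℕ} (A : Matrix (Fin n) (Fin n) ℝ) (hsymm : A.IsSymm)
    (Vtr : Finset (Fin n)) (lam : ℝ) (m : ℕ) : (Bmat Vtr lam m A).IsHermitian := by
  have hs : ∀ s t, A s t = A t s := fun s t => hsymm.apply t s
  ext s t
  simp only [Bmat, Stin, selMat, lapMat, conjTranspose_apply, star_trivial, Matrix.add_apply,
    Matrix.smul_apply, Matrix.sub_apply, diagonal_apply, smul_eq_mul, hs t s]
  by_cases hst : s = t
  · subst hst; rfl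
  · simp [hst, Ne.symm hst]

/-- The trace of `B` is positive: the diagonal of `L` is nonnegative and `S̃_in` has trace `1`. -/
lemma Bmat_trace_pos {n : ℕ} (A : Matrix (Fin n) (Fin n) ℝ) (hA : ∀ s t, 0 ≤ A s t)
    (hdiag : ∀ s, A s s = 0) (Vtr : Finset (Fin n)) (hVtr : Vtr.Nonempty) (lam : ℝ)
    (hlam : 0 < lam) (m : ℕ) : 0 < (Bmat Vtr lam m A).trace := by
  have hc : (0 : ℝ) < (Vtr.card : ℝ)⁻¹ := by
    have := hVtr.card_pos
    positivity
  have hl : ∀ s, 0 ≤ lam / m * ∑ t, A s t := fun s =>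
    mul_nonneg (by positivity) (Finset.sum_nonneg fun t _ => hA s t)
  have hent : ∀ s, Bmat Vtr lam m A s s =
      (Vtr.card : ℝ)⁻¹ * (if s ∈ Vtr then 1 else 0) + lam / m * ∑ t, A s t := by
    intro s
    simp [Bmat, Stin, selMat, lapMat, hdiag]
  obtain ⟨v, hv⟩ := hVtr
  refine Finset.sum_pos' (fun s _ => ?_) ⟨v, Finset.mem_univ _, ?_⟩
  · rw [diag_apply, hent]
    have := hl s
    split_ifs <;> simp <;> positivity
  · rw [diag_apply, hent, if_pos hv]
    have := hl v
    linarith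

lemma norm_edgeVec_sq_le {n : ℕ} (i j : Fin n) : ‖WithLp.toLp 2 (edgeVec i j)‖ ^ 2 ≤ 2 := by
  by_cases hij : i = j
  · subst hij
    simp [edgeVec]
  · rw [EuclideanSpace.norm_sq_eq]
    have : ∀ s, ‖(WithLp.toLp 2 (edgeVec i j)) s‖ ^ 2
        = (if s = i then (1 : ℝ) else 0) + (if s = j then 1 else 0) := by
      intro s
      simp only [edgeVec, Pi.sub_apply, Pi.single_apply, Real.norm_eq_abs, sq_abs]
      grind
    simp_rw [this, Finset.sum_add_distrib]
    norm_num

lemma norm_Stin_mulVec_le {n : ℕ} (Vtr : Finset (Fin n)) (hVtr : Vtr.Nonempty) (Y : Fin n → ℝ) :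
    ‖WithLp.toLp 2 ((Stin Vtr) *ᵥ Y)‖ ≤ ‖Y‖ / √(Vtr.card : ℝ) := by
  have hc : (0 : ℝ) < Vtr.card := by exact_mod_cast hVtr.card_pos
  have hent : ∀ s, (Stin Vtr *ᵥ Y) s = if s ∈ Vtr then (Vtr.card : ℝ)⁻¹ * Y s else 0 := by
    intro s
    simp [Stin, selMat, smul_mulVec, mulVec_diagonal]
  refine abs_le_of_sq_le_sq' ?_ (by positivity) |>.2
  rw [EuclideanSpace.norm_sq_eq, div_pow, Real.sq_sqrt hc.le]
  calc ∑ s, ‖(WithLp.toLp 2 (Stin Vtr *ᵥ Y)) s‖ ^ 2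
      ≤ ∑ s, if s ∈ Vtr then ((Vtr.card : ℝ)⁻¹ * ‖Y‖) ^ 2 else 0 := by
        refine Finset.sum_le_sum fun s _ => ?_
        simp only [hent]
        split_ifs
        · rw [norm_mul, Real.norm_of_nonneg (by positivity)]
          gcongr
          exact norm_le_pi_norm Y s
        · simp
    _ = ‖Y‖ ^ 2 / Vtr.card := by
        simp
        field_simp

/-- The product rule: the derivative of `(T_r)_u` as a sum over the position of the differentiated
factor, each summand splitting because the derivative of the Laplacian has rank one. -/
lemma deriv_Tvec {n : ℕ} (A : Matrix (Fin n) (Fin n) ℝ) (hsymm : A.IsSymm)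
    (Vtr : Finset (Fin n)) (lam : ℝ) (m : ℕ) (μ : ℝ) (Y : Fin n → ℝ) (i j u : Fin n) (r : ℕ) :
    deriv (fun θ : ℝ => Tvec Vtr lam m (pert A i j θ) μ Y r u) (A i j) =
      ∑ b ∈ Finset.range r, -(μ⁻¹ * (lam / m)) *
        ((((1 - μ⁻¹ • Bmat Vtr lam m A) ^ (r - 1 - b)) *ᵥ edgeVec i j) u *
        (edgeVec i j ⬝ᵥ ((1 - μ⁻¹ • Bmat Vtr lam m A) ^ b) *ᵥ (μ⁻¹ • (Stin Vtr) *ᵥ Y))) := by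
  set d := edgeVec i j with hd
  set M := 1 - μ⁻¹ • Bmat Vtr lam m A with hM
  set w := μ⁻¹ • (Stin Vtr) *ᵥ Y with hw
  have hN : ∀ θ, 1 - μ⁻¹ • Bmat Vtr lam m (pert A i j θ) =
      M + (θ - A i j) • (-(μ⁻¹ * (lam / m)) • vecMulVec d d) := by
    intro θ
    rw [hM, Bmat, lapMat_pert A hsymm, Bmat, ← hd]
    module
  have h1 : HasDerivAt (fun θ : ℝ => M + (θ - A i j) • (-(μ⁻¹ * (lam / m)) • vecMulVec d d))
      (-(μ⁻¹ * (lam / m)) • vecMulVec d d) (A i j) := by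
    have h := (((hasDerivAt_id (A i j)).sub_const (A i j)).smul_const
      (-(μ⁻¹ * (lam / m)) • vecMulVec d d)).const_add M
    simpa using h
  have h2 := h1.fun_pow' r
  let φ : Matrix (Fin n) (Fin n) ℝ →ₗ[ℝ] ℝ :=
    { toFun := fun X => (X *ᵥ w) u
      map_add' := fun X Z => by simp [add_mulVec]
      map_smul' := fun c X => by simp [smul_mulVec] }
  have h3 := (LinearMap.toContinuousLinearMap φ).hasFDerivAt.comp_hasDerivAt (A i j) h2
  have h4 : (fun θ : ℝ => Tvec Vtr lam m (pert A i j θ) μ Y r u) =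
      (LinearMap.toContinuousLinearMap φ) ∘
        (fun θ => (M + (θ - A i j) • (-(μ⁻¹ * (lam / m)) • vecMulVec d d)) ^ r) := by
    funext θ
    simp only [Tvec, hN, Function.comp]
    rfl
  rw [h4, h3.deriv, map_sum]
  refine Finset.sum_congr rfl fun b _ => ?_
  change ((_ * _ * _) *ᵥ w) u = _
  simp only [sub_self, zero_smul, add_zero, Nat.pred_eq_sub_one]
  rw [← mulVec_mulVec, ← mulVec_mulVec, smul_mulVec, vecMulVec_mulVec, mulVec_smul]
  simp only [mulVec_smul, op_smul_eq_smul, Pi.smul_apply, smul_eq_mul]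
  ring

end Aux

open scoped Matrix.Norms.L2Operator in
theorem neumann_term_deriv_bound
    {n : ℕ} (G : SimpleGraph (Fin n)) (A : Matrix (Fin n) (Fin n) ℝ)
    (hconn : G.Connected)
    (hsupp : ∀ u v, ¬ G.Adj u v → A u v = 0)
    (hpos : ∀ u v, G.Adj u v → 0 < A u v)
    (hsymm : A.IsSymm)
    (m : ℕ) (hmeq : m = G.edgeSet.ncard) (hm : 0 < m)
    (Vtr : Finset (Fin n)) (hVtr : Vtr.Nonempty)
    (lam : ℝ) (hlam : 0 < lam)
    (μmin μmax : ℝ)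
    (hmin_mem : ∃ x : Fin n → ℝ, x ≠ 0 ∧ (Bmat Vtr lam m A).mulVec x = μmin • x)
    (hmin_le : ∀ (μ : ℝ) (x : Fin n → ℝ), x ≠ 0 →
      (Bmat Vtr lam m A).mulVec x = μ • x → μmin ≤ μ)
    (hmax_mem : ∃ x : Fin n → ℝ, x ≠ 0 ∧ (Bmat Vtr lam m A).mulVec x = μmax • x)
    (hmax_ge : ∀ (μ : ℝ) (x : Fin n → ℝ), x ≠ 0 →
      (Bmat Vtr lam m A).mulVec x = μ • x → μ ≤ μmax)
    (Yobs : Fin n → ℝ) (i j u : Fin n) (k q : ℕ)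
    (hik : (k : ℕ∞) ≤ G.edist i u) (hjk : (k : ℕ∞) ≤ G.edist j u)
    (hiq : ∀ v ∈ Vtr, (q : ℕ∞) ≤ G.edist i v)
    (hjq : ∀ v ∈ Vtr, (q : ℕ∞) ≤ G.edist j v)
    (r : ℕ) :
    (r < q + k →
      deriv (fun θ : ℝ => Tvec Vtr lam m (pert A i j θ) μmax Yobs r u) (A i j) = 0) ∧
    (q + k ≤ r →
      |deriv (fun θ : ℝ => Tvec Vtr lam m (pert A i j θ) μmax Yobs r u) (A i j)| ≤
        4 * lam * ‖Yobs‖ / ((m : ℝ) * μmax ^ 2 * Real.sqrt (Vtr.card : ℝ)) *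
          ((r - q - k : ℕ) : ℝ) * (1 - μmin / μmax) ^ (r - 1)) := by
  set M := 1 - μmax⁻¹ • Bmat Vtr lam m A with hM
  set w := μmax⁻¹ • (Stin Vtr).mulVec Yobs with hw
  have hnn : ∀ s t, 0 ≤ A s t := fun s t => by
    by_cases h : G.Adj s t
    · exact (hpos s t h).le
    · exact (hsupp s t h).ge
  have hdiag : ∀ s, A s s = 0 := fun s => hsupp s s (G.loopless.irrefl s)
  have hB := Bmat_isHermitian A hsymm Vtr lam m
  have hμ : 0 < μmax := by
    have htr := Bmat_trace_pos A hnn hdiag Vtr hVtr lam hlam m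
    by_contra! hle
    rw [hB.trace_eq_sum_eigenvalues] at htr
    refine absurd htr (not_lt.mpr (Finset.sum_nonpos fun s _ => ?_))
    refine le_trans (hmax_ge _ _ ?_ (hB.mulVec_eigenvectorBasis s)) hle
    intro h0
    exact hB.eigenvectorBasis.toBasis.ne_zero s (by simpa using h0)
  have hle : μmin ≤ μmax := by
    obtain ⟨x, hx, hxe⟩ := hmin_mem
    exact hmax_ge _ x hx hxe
  have hν : 0 ≤ 1 - μmin / μmax := by
    rw [sub_nonneg, div_le_one hμ]; exact hle
  have hMnorm : ‖M‖ ≤ 1 - μmin / μmax := by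
    refine norm_le_of_eigenvalues M ?_ _ hν ?_
    · exact Matrix.isHermitian_one.sub (hB.smul (IsSelfAdjoint.all μmax⁻¹))
    · intro e x hx he
      -- An eigenvalue `e` of `M` comes from the eigenvalue `μmax (1 - e)` of `B`.
      have hBx : (Bmat Vtr lam m A).mulVec x = (μmax * (1 - e)) • x := by
        have h1 : x - μmax⁻¹ • (Bmat Vtr lam m A).mulVec x = e • x := by
          rw [← he, hM, Matrix.sub_mulVec, Matrix.one_mulVec, Matrix.smul_mulVec]
        have h2 : μmax⁻¹ • (Bmat Vtr lam m A).mulVec x = (1 - e) • x := by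
          rw [sub_smul, one_smul, ← h1]; abel
        rw [mul_smul, ← h2, smul_inv_smul₀ hμ.ne']
      have hlo := hmin_le _ x hx hBx
      have hhi := hmax_ge _ x hx hBx
      have he0 : 0 ≤ e := by nlinarith
      rw [abs_of_nonneg he0, le_sub_comm, div_le_iff₀ hμ]
      linarith
  have hMpow : ∀ a, ‖M ^ a‖ ≤ (1 - μmin / μmax) ^ a := fun a => by
    rcases Nat.eq_zero_or_pos a with rfl | ha
    · have : Nonempty (Fin n) := ⟨u⟩
      simp
    · exact (norm_pow_le' M ha).trans (pow_le_pow_left₀ (norm_nonneg _) hMnorm a)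
  have hMsupp : ∀ s t, s ≠ t → ¬ G.Adj s t → M s t = 0 := by
    intro s t hst hadj
    simp [hM, Bmat, Stin, selMat, lapMat, hst, hsupp s t hadj]
  have hloc := pow_apply_eq_zero G M hMsupp
  have hleft : ∀ a, a < k → ((M ^ a).mulVec (edgeVec i j)) u = 0 := by
    intro a ha
    have hak : (a : ℕ∞) < k := by exact_mod_cast ha
    simp [edgeVec, Matrix.mulVec_sub,
      hloc a u i (by rw [SimpleGraph.edist_comm]; exact hak.trans_le hik),
      hloc a u j (by rw [SimpleGraph.edist_comm]; exact hak.trans_le hjk)]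
  have hright : ∀ b, b < q → edgeVec i j ⬝ᵥ (M ^ b).mulVec w = 0 := by
    intro b hb
    have hbq : (b : ℕ∞) < q := by exact_mod_cast hb
    have hz : ∀ s, (∀ v ∈ Vtr, (q : ℕ∞) ≤ G.edist s v) → ((M ^ b).mulVec w) s = 0 := by
      intro s hs
      rw [Matrix.mulVec, dotProduct]
      refine Finset.sum_eq_zero fun v _ => ?_
      by_cases hv : v ∈ Vtr
      · rw [hloc b s v (hbq.trans_le (hs v hv)), zero_mul]
      · have : w v = 0 := by
          simp [hw, Stin, selMat, Matrix.smul_mulVec, Matrix.mulVec_diagonal, hv]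
        rw [this, mul_zero]
    simp [edgeVec, sub_dotProduct, hz i hiq, hz j hjq]
  rw [deriv_Tvec A hsymm, ← hM, ← hw]
  refine ⟨fun hr => Finset.sum_eq_zero fun b hb => ?_, fun hr => ?_⟩
  · have hb' := Finset.mem_range.mp hb
    by_cases hbq : b < q
    · rw [hright b hbq]; ring
    · rw [hleft (r - 1 - b) (by omega)]; ring
  · set ν := 1 - μmin / μmax with hνdef
    set C : ℝ := 4 * lam * ‖Yobs‖ / ((m : ℝ) * μmax ^ 2 * Real.sqrt (Vtr.card : ℝ)) with hC
    have hm' : (0 : ℝ) < m := by exact_mod_cast hm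
    have hc : (0 : ℝ) < Real.sqrt (Vtr.card : ℝ) :=
      Real.sqrt_pos.mpr (by exact_mod_cast hVtr.card_pos)
    have hC0 : 0 ≤ C := by positivity
    have hd2 := norm_edgeVec_sq_le i j
    have hwn : ‖WithLp.toLp 2 w‖ ≤ μmax⁻¹ * (‖Yobs‖ / Real.sqrt (Vtr.card : ℝ)) := by
      rw [hw, WithLp.toLp_smul, norm_smul, Real.norm_of_nonneg (by positivity)]
      gcongr
      exact norm_Stin_mulVec_le Vtr hVtr Yobs
    have hterm : ∀ b ∈ Finset.range r, |-(μmax⁻¹ * (lam / m)) *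
        (((M ^ (r - 1 - b)).mulVec (edgeVec i j)) u * (edgeVec i j ⬝ᵥ (M ^ b).mulVec w))| ≤
        if b ∈ Finset.Ico q (r - k) then C * ν ^ (r - 1) else 0 := by
      intro b hb
      have hb' := Finset.mem_range.mp hb
      split_ifs with hmem
      · have h1 := abs_dotProduct_mulVec_le (M ^ (r - 1 - b)) (Pi.single u 1) (edgeVec i j)
        have h2 := abs_dotProduct_mulVec_le (M ^ b) (edgeVec i j) w
        rw [single_one_dotProduct] at h1
        have hu : ‖WithLp.toLp 2 (Pi.single u (1 : ℝ) : Fin n → ℝ)‖ = 1 := by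
          simp
        rw [hu, one_mul] at h1
        rw [abs_mul, abs_mul, abs_neg, abs_of_nonneg (by positivity)]
        set δ := ‖WithLp.toLp 2 (edgeVec i j)‖ with hδ
        have hδ0 : 0 ≤ δ := norm_nonneg _
        calc _ ≤ μmax⁻¹ * (lam / m) * ((ν ^ (r - 1 - b) * δ) *
              (ν ^ b * (δ * (μmax⁻¹ * (‖Yobs‖ / Real.sqrt (Vtr.card : ℝ)))))) := by
              gcongr
              · exact h1.trans (by gcongr; exact hMpow _)
              · exact h2.trans (by gcongr; exact hMpow _)
          _ = δ ^ 2 * (C / 4 * (ν ^ (r - 1 - b) * ν ^ b)) := by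
              rw [hC]; field_simp
          _ = δ ^ 2 * (C / 4 * ν ^ (r - 1)) := by
              rw [← pow_add]; congr 3; omega
          _ ≤ 4 * (C / 4 * ν ^ (r - 1)) := by
              gcongr; linarith
          _ = C * ν ^ (r - 1) := by ring
      · rw [Finset.mem_Ico, not_and_or] at hmem
        by_cases hbq : b < q
        · rw [hright b hbq]; simp
        · rw [hleft (r - 1 - b) (by omega)]; simp
    refine (Finset.abs_sum_le_sum_abs _ _).trans ((Finset.sum_le_sum hterm).trans ?_)
    have hsub : Finset.range r ∩ Finset.Ico q (r - k) = Finset.Ico q (r - k) := by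
      ext b; simp only [Finset.mem_inter, Finset.mem_range, Finset.mem_Ico]; omega
    rw [Finset.sum_ite_mem, hsub, Finset.sum_const, Nat.card_Ico, nsmul_eq_mul,
      show r - k - q = r - q - k by omega]
    exact le_of_eq (by ring)
end

section
/- Assume G is connected, let Y_obs ∈ ℝ^n, y_∞ = ‖Y_obs‖_∞, let V_out ⊆ {1,…,n} be nonempty with diagonal 0/1 selection matrix S_out, let μ_min be the smallest eigenvalue of B, and Y(A) = B^{-1} S̃_in Y_obs. Then ‖S_out (Y(A) − Y_obs)‖ ≤ ((1 + μ_min √(|V_tr| |V_out|)) / (μ_min √|V_tr|)) y_∞ in Euclidean norm. -/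
/-!
The Laplacian has quadratic form `½ ∑ A u v (x u - x v)²`, so `B` is positive semidefinite, and a
null vector of `B` is constant along edges (hence constant, by connectedness) and vanishes on the
nonempty set `Vtr`; thus `B` is positive definite (`bmat_posDef`), so it is invertible and
`μmin > 0`. By the spectral theorem `B - μmin • 1` is positive semidefinite, and Cauchy–Schwarz
turns `μmin ‖x‖² ≤ ⟪x, B x⟫` into the resolvent bound `μmin ‖x‖ ≤ ‖B x‖`
(`mul_norm_le_norm_mulVec`). With `x = Y(A)` this gives `‖Y(A)‖ ≤ ‖S̃_in Y_obs‖ / μmin`. Finally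
`‖S_V y‖ ≤ √|V| ‖y‖_∞` (`norm_selMat_le_card`) is used for `Vtr` and for `Vout`, and the triangle
inequality concludes.
-/

/-! STATEMENT 16: `‖S_out (Y(A) - Y_obs)‖ ≤ ((1 + μmin √(|V_tr| |V_out|)) / (μmin √|V_tr|)) y_∞`
in Euclidean norm, where `Y(A) = B⁻¹ S̃_in Y_obs`. -/

open scoped BigOperators Matrix

/-- The Dirichlet form of the weighted Laplacian; doubling avoids a choice of edge orientation. -/
lemma two_mul_lapMat_form {n : ℕ} (A : Matrix (Fin n) (Fin n) ℝ) (hsymm : A.IsSymm)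
    (x : Fin n → ℝ) :
    2 * (x ⬝ᵥ lapMat A *ᵥ x) = ∑ u, ∑ v, A u v * (x u - x v) ^ 2 := by
  have h1 : x ⬝ᵥ lapMat A *ᵥ x = ∑ u, ∑ v, (A u v * x u ^ 2 - A u v * x u * x v) := by
    rw [lapMat, Matrix.sub_mulVec, dotProduct_sub]
    simp only [Finset.sum_sub_distrib]
    congr 1
    · simp only [dotProduct, Matrix.mulVec_diagonal, Finset.mul_sum, Finset.sum_mul]
      exact Finset.sum_congr rfl fun u _ => Finset.sum_congr rfl fun v _ => by ring
    · simp only [dotProduct, Matrix.mulVec, Finset.mul_sum]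
      exact Finset.sum_congr rfl fun u _ => Finset.sum_congr rfl fun v _ => by ring
  have h2 : x ⬝ᵥ lapMat A *ᵥ x = ∑ u, ∑ v, (A u v * x v ^ 2 - A u v * x u * x v) := by
    rw [h1, Finset.sum_comm]
    refine Finset.sum_congr rfl fun u _ => Finset.sum_congr rfl fun v _ => ?_
    rw [hsymm.apply u v]; ring
  rw [two_mul]
  nth_rewrite 1 [h1]
  rw [h2, ← Finset.sum_add_distrib]
  refine Finset.sum_congr rfl fun u _ => ?_
  rw [← Finset.sum_add_distrib]
  exact Finset.sum_congr rfl fun v _ => by ring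

lemma bmat_isHermitian {n : ℕ} {A : Matrix (Fin n) (Fin n) ℝ} (hsymm : A.IsSymm)
    (Vtr : Finset (Fin n)) (lam : ℝ) (m : ℕ) : (Bmat Vtr lam m A).IsHermitian := by
  simp only [Matrix.IsHermitian, Matrix.conjTranspose_eq_transpose_of_trivial, Bmat, Stin, selMat,
    lapMat, Matrix.transpose_add, Matrix.transpose_smul, Matrix.transpose_sub,
    Matrix.diagonal_transpose, hsymm.eq]

lemma bmat_form {n : ℕ} (A : Matrix (Fin n) (Fin n) ℝ) (hsymm : A.IsSymm)
    (Vtr : Finset (Fin n)) (lam : ℝ) (m : ℕ) (x : Fin n → ℝ) :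
    x ⬝ᵥ Bmat Vtr lam m A *ᵥ x = (Vtr.card : ℝ)⁻¹ * ∑ i ∈ Vtr, x i ^ 2 +
      lam / m * ((∑ u, ∑ v, A u v * (x u - x v) ^ 2) / 2) := by
  rw [← two_mul_lapMat_form A hsymm x, mul_div_cancel_left₀ _ two_ne_zero]
  have h : x ⬝ᵥ selMat Vtr *ᵥ x = ∑ i ∈ Vtr, x i ^ 2 := by
    simp [selMat, dotProduct, Matrix.mulVec_diagonal, Finset.sum_ite_mem, pow_two]
  simp only [Bmat, Stin, Matrix.add_mulVec, Matrix.smul_mulVec, dotProduct_add, dotProduct_smul,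
    smul_eq_mul, h]

/-- Positive definiteness is where connectedness of `G` and nonemptiness of `Vtr` enter. -/
lemma bmat_posDef {n : ℕ} (G : SimpleGraph (Fin n)) (A : Matrix (Fin n) (Fin n) ℝ)
    (hconn : G.Connected)
    (hsupp : ∀ u v, ¬ G.Adj u v → A u v = 0)
    (hpos : ∀ u v, G.Adj u v → 0 < A u v)
    (hsymm : A.IsSymm) (m : ℕ) (hm : 0 < m)
    (Vtr : Finset (Fin n)) (hVtr : Vtr.Nonempty) (lam : ℝ) (hlam : 0 < lam) :
    (Bmat Vtr lam m A).PosDef := by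
  refine .of_dotProduct_mulVec_pos (bmat_isHermitian hsymm Vtr lam m) fun x hx => ?_
  rw [star_trivial, bmat_form A hsymm]
  have hA : ∀ u v, 0 ≤ A u v := fun u v => by
    by_cases h : G.Adj u v
    · exact (hpos u v h).le
    · exact (hsupp u v h).ge
  have hc : (0 : ℝ) < (Vtr.card : ℝ)⁻¹ := by
    have := hVtr.card_pos
    positivity
  have hl : 0 < lam / m := by positivity
  have hterm : ∀ u v, 0 ≤ A u v * (x u - x v) ^ 2 := fun u v =>
    mul_nonneg (hA u v) (sq_nonneg _)
  have hS : 0 ≤ ∑ i ∈ Vtr, x i ^ 2 := Finset.sum_nonneg fun i _ => sq_nonneg _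
  have hE : 0 ≤ ∑ u, ∑ v, A u v * (x u - x v) ^ 2 :=
    Finset.sum_nonneg fun u _ => Finset.sum_nonneg fun v _ => hterm u v
  by_contra hneg
  have hS0 : ∑ i ∈ Vtr, x i ^ 2 = 0 := by
    by_contra h
    have := mul_pos hc (hS.lt_of_ne' h)
    have := mul_nonneg hl.le (div_nonneg hE two_pos.le)
    linarith
  have hE0 : ∑ u, ∑ v, A u v * (x u - x v) ^ 2 = 0 := by
    by_contra h
    have := mul_pos hl (div_pos (hE.lt_of_ne' h) two_pos)
    have := mul_nonneg hc.le hS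
    linarith
  have hadj : ∀ u v, G.Adj u v → x u = x v := fun u v huv => by
    have h1 := (Finset.sum_eq_zero_iff_of_nonneg
      (fun u _ => Finset.sum_nonneg fun v _ => hterm u v)).1 hE0 u (Finset.mem_univ _)
    have h2 := (Finset.sum_eq_zero_iff_of_nonneg (fun v _ => hterm u v)).1 h1 v
      (Finset.mem_univ _)
    have h3 := (mul_eq_zero.1 h2).resolve_left (hpos u v huv).ne'
    exact sub_eq_zero.1 (pow_eq_zero_iff two_ne_zero |>.1 h3)
  have hwalk : ∀ u v, G.Walk u v → x u = x v := fun u v p => by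
    induction p with
    | nil => rfl
    | cons h _ ih => exact (hadj _ _ h).trans ih
  obtain ⟨i, hi⟩ := hVtr
  have hxi : x i = 0 := pow_eq_zero_iff two_ne_zero |>.1
    ((Finset.sum_eq_zero_iff_of_nonneg (fun i _ => sq_nonneg (x i))).1 hS0 i hi)
  refine hx (funext fun j => ?_)
  obtain ⟨p⟩ := hconn.preconnected j i
  exact (hwalk j i p).trans hxi

/-- A symmetric matrix whose eigenvalues are all at least `μ` expands Euclidean norms by at least
`μ`. -/
lemma mul_norm_le_norm_mulVec {n : ℕ} {B : Matrix (Fin n) (Fin n) ℝ} (hB : B.IsHermitian)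
    (μ : ℝ) (hμ : ∀ (ν : ℝ) (x : Fin n → ℝ), x ≠ 0 → B *ᵥ x = ν • x → μ ≤ ν)
    (x : Fin n → ℝ) :
    μ * ‖WithLp.toLp 2 x‖ ≤ ‖WithLp.toLp 2 (B *ᵥ x)‖ := by
  have hH : (B - μ • (1 : Matrix (Fin n) (Fin n) ℝ)).IsHermitian := by
    refine hB.sub ?_
    simp [Matrix.IsHermitian]
  have hpsd : (B - μ • (1 : Matrix (Fin n) (Fin n) ℝ)).PosSemidef := by
    rw [hH.posSemidef_iff_eigenvalues_nonneg]
    intro i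
    have he := hH.mulVec_eigenvectorBasis i
    have h0 : (hH.eigenvectorBasis i).ofLp ≠ 0 := fun h =>
      hH.eigenvectorBasis.orthonormal.ne_zero i (by ext j; exact congrFun h j)
    have := hμ (hH.eigenvalues i + μ) _ h0 (by
      rw [Matrix.sub_mulVec, Matrix.smul_mulVec, Matrix.one_mulVec, sub_eq_iff_eq_add] at he
      rw [he, add_smul])
    simpa using this
  have hq := hpsd.dotProduct_mulVec_nonneg x
  rw [star_trivial, Matrix.sub_mulVec, Matrix.smul_mulVec, Matrix.one_mulVec, dotProduct_sub,
    dotProduct_smul, smul_eq_mul] at hq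
  have hsq : x ⬝ᵥ x = ‖WithLp.toLp 2 x‖ ^ 2 := by
    rw [EuclideanSpace.real_norm_sq_eq]
    simp [dotProduct, pow_two]
  have hcs : x ⬝ᵥ B *ᵥ x ≤ ‖WithLp.toLp 2 x‖ * ‖WithLp.toLp 2 (B *ᵥ x)‖ := by
    have := real_inner_le_norm (WithLp.toLp 2 x) (WithLp.toLp 2 (B *ᵥ x))
    rwa [EuclideanSpace.inner_toLp_toLp, star_trivial, dotProduct_comm] at this
  rw [hsq] at hq
  rcases (norm_nonneg (WithLp.toLp 2 x)).eq_or_lt' with h | h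
  · rw [h, mul_zero]; exact norm_nonneg _
  · refine le_of_mul_le_mul_left ?_ h
    nlinarith

lemma norm_selMat_le {n : ℕ} (V : Finset (Fin n)) (y : Fin n → ℝ) :
    ‖WithLp.toLp 2 (selMat V *ᵥ y)‖ ≤ ‖WithLp.toLp 2 y‖ := by
  rw [EuclideanSpace.norm_eq, EuclideanSpace.norm_eq]
  refine Real.sqrt_le_sqrt (Finset.sum_le_sum fun i _ => ?_)
  by_cases h : i ∈ V <;> simp [selMat, Matrix.mulVec_diagonal, h, sq_nonneg]

/-- Comparison of the Euclidean norm on the coordinates in `V` with the sup norm `‖y‖`. -/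
lemma norm_selMat_le_card {n : ℕ} (V : Finset (Fin n)) (y : Fin n → ℝ) :
    ‖WithLp.toLp 2 (selMat V *ᵥ y)‖ ≤ √(V.card : ℝ) * ‖y‖ := by
  rw [EuclideanSpace.norm_eq]
  refine Real.sqrt_le_iff.2 ⟨by positivity, ?_⟩
  rw [mul_pow, Real.sq_sqrt (Nat.cast_nonneg _)]
  calc ∑ i, ‖(WithLp.toLp 2 (selMat V *ᵥ y)).ofLp i‖ ^ 2 = ∑ i ∈ V, ‖y i‖ ^ 2 := by
        rw [← Finset.sum_filter_add_sum_filter_not Finset.univ (· ∈ V)]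
        rw [Finset.sum_eq_zero (s := Finset.univ.filter (· ∉ V))
          (fun i hi => by
            simp [selMat, Matrix.mulVec_diagonal, (Finset.mem_filter.1 hi).2]), add_zero]
        rw [Finset.filter_mem_eq_inter, Finset.univ_inter]
        exact Finset.sum_congr rfl fun i hi => by simp [selMat, Matrix.mulVec_diagonal, hi]
    _ ≤ ∑ i ∈ V, ‖y‖ ^ 2 := Finset.sum_le_sum fun i _ => by
        gcongr; exact norm_le_pi_norm y i
    _ = V.card * ‖y‖ ^ 2 := by simp

theorem outer_residual_norm_bound
    {n : ℕ} (G : SimpleGraph (Fin n)) (A : Matrix (Fin n) (Fin n) ℝ)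
    (hconn : G.Connected)
    (hsupp : ∀ u v, ¬ G.Adj u v → A u v = 0)
    (hpos : ∀ u v, G.Adj u v → 0 < A u v)
    (hsymm : A.IsSymm)
    (m : ℕ) (hmeq : m = G.edgeSet.ncard) (hm : 0 < m)
    (Vtr : Finset (Fin n)) (hVtr : Vtr.Nonempty)
    (lam : ℝ) (hlam : 0 < lam)
    (μmin : ℝ)
    (hmin_mem : ∃ x : Fin n → ℝ, x ≠ 0 ∧ (Bmat Vtr lam m A).mulVec x = μmin • x)
    (hmin_le : ∀ (μ : ℝ) (x : Fin n → ℝ), x ≠ 0 →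
      (Bmat Vtr lam m A).mulVec x = μ • x → μmin ≤ μ)
    (Vout : Finset (Fin n)) (hVout : Vout.Nonempty)
    (Yobs : Fin n → ℝ) :
    Real.sqrt (∑ a, (((selMat Vout).mulVec
        ((Bmat Vtr lam m A)⁻¹.mulVec ((Stin Vtr).mulVec Yobs) - Yobs)) a) ^ 2) ≤
      (1 + μmin * Real.sqrt ((Vtr.card : ℝ) * (Vout.card : ℝ))) /
        (μmin * Real.sqrt (Vtr.card : ℝ)) * ‖Yobs‖ := by
  have hPD := bmat_posDef G A hconn hsupp hpos hsymm m hm Vtr hVtr lam hlam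
  have hμ : 0 < μmin := by
    obtain ⟨x, hx, he⟩ := hmin_mem
    have h := hPD.dotProduct_mulVec_pos hx
    rw [star_trivial, he, dotProduct_smul, smul_eq_mul] at h
    have h2 : 0 ≤ x ⬝ᵥ x := Finset.sum_nonneg fun i _ => mul_self_nonneg _
    exact pos_of_mul_pos_left h h2
  set B := Bmat Vtr lam m A
  set Y := B⁻¹ *ᵥ (Stin Vtr *ᵥ Yobs) with hY
  have hBY : B *ᵥ Y = Stin Vtr *ᵥ Yobs := by
    rw [hY, Matrix.mulVec_mulVec, Matrix.mul_nonsing_inv _ ((Matrix.isUnit_iff_isUnit_det _).1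
      hPD.isUnit), Matrix.one_mulVec]
  have hcpos : (0 : ℝ) < Vtr.card := by exact_mod_cast hVtr.card_pos
  have hspos : 0 < √(Vtr.card : ℝ) := Real.sqrt_pos.2 hcpos
  have hss : √(Vtr.card : ℝ) * √(Vtr.card : ℝ) = Vtr.card := Real.mul_self_sqrt hcpos.le
  have hin : ‖WithLp.toLp 2 (Stin Vtr *ᵥ Yobs)‖ ≤ ‖Yobs‖ / √(Vtr.card : ℝ) := by
    rw [Stin, Matrix.smul_mulVec, WithLp.toLp_smul, norm_smul, norm_inv, Real.norm_natCast]
    calc (Vtr.card : ℝ)⁻¹ * ‖WithLp.toLp 2 (selMat Vtr *ᵥ Yobs)‖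
        ≤ (Vtr.card : ℝ)⁻¹ * (√(Vtr.card : ℝ) * ‖Yobs‖) := by
          gcongr; exact norm_selMat_le_card _ _
      _ = ‖Yobs‖ / √(Vtr.card : ℝ) := by
          field_simp
          rw [pow_two, hss]
  have hYn : ‖WithLp.toLp 2 Y‖ ≤ ‖Yobs‖ / √(Vtr.card : ℝ) / μmin := by
    rw [le_div_iff₀' hμ]
    have := mul_norm_le_norm_mulVec hPD.isHermitian μmin hmin_le Y
    rw [hBY] at this
    exact this.trans hin
  have hlhs : √(∑ a, ((selMat Vout *ᵥ (Y - Yobs)) a) ^ 2) =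
      ‖WithLp.toLp 2 (selMat Vout *ᵥ (Y - Yobs))‖ := by
    simp [EuclideanSpace.norm_eq]
  rw [hlhs, Matrix.mulVec_sub, WithLp.toLp_sub]
  calc ‖WithLp.toLp 2 (selMat Vout *ᵥ Y) - WithLp.toLp 2 (selMat Vout *ᵥ Yobs)‖
      ≤ ‖WithLp.toLp 2 (selMat Vout *ᵥ Y)‖ + ‖WithLp.toLp 2 (selMat Vout *ᵥ Yobs)‖ :=
        norm_sub_le _ _
    _ ≤ ‖Yobs‖ / √(Vtr.card : ℝ) / μmin + √(Vout.card : ℝ) * ‖Yobs‖ :=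
        add_le_add ((norm_selMat_le _ _).trans hYn) (norm_selMat_le_card _ _)
    _ = (1 + μmin * √((Vtr.card : ℝ) * (Vout.card : ℝ))) / (μmin * √(Vtr.card : ℝ)) *
          ‖Yobs‖ := by
        rw [Real.sqrt_mul hcpos.le]
        field_simp
end
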